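/- arXiv:1708.03182 — 2 statements merged into one kernel-verified Lean document; each statement's English description precedes it below -/
import Mathlib

section
/- Equivalence of the two linear simplicity constraint sets: let e : Matrix (Fin 4) (Fin 4) ℝ be any matrix and let B be a bivector field. Then the starred constraint set [(i) for all A, a, b, c with c ≠ a and c ≠ b: ∑_{B'} (⋆B) a b A B' * e B' c = 0; (ii) for all A, a and all b, c ≠ a: ∑_{B'} (⋆B) a b A B' * e B' b = ∑_{B'} (⋆B) a c A B' * e B' c] holds if and only if the unstarred constraint set [(i) for all A, a, b: ∑_{B'} B A B' a b * e B' a = 0 and ∑_{B'} B A B' a b * e B' b = 0; (ii) for all A and all pairwise distinct a, b, c: ∑_{B'} (B A B' a b * e B' c + B A B' a c * e B' b) = 0] holds. -/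
/-!
Fix the free internal index `A` and contract the other one with the tetrad:
`T a b c = ∑ B', B A B' a b * e B' c`, which is antisymmetric in `a, b`. If `a, b, c, d` are
pairwise distinct, only the orderings of `c, d` survive in the Hodge dual, so contracting
`⋆B` on `a b` with `e` on `x` gives `ε a b c d * T c d x` (`sum_starB_mul`), with `ε a b c d ≠ 0`.
Hence each starred constraint on `(a, b)` is, up to a nonzero sign, a condition on `T` at the
complementary pair `(c, d)`. The starred constraints (i) say `T c d c = 0`, and the starred
constraints (ii) say `T c d b = -T b d c`, because `ε` is odd under exchange of `b` and `c`.
Given the antisymmetry of `T`, these are the two unstarred constraints.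
-/

/-- The totally antisymmetric Levi-Civita symbol on `Fin 4`, with `ε 0 1 2 3 = 1`. -/
noncomputable def eps (a b c d : Fin 4) : ℝ :=
  ((Int.sign ((b.1 : ℤ) - a.1) * Int.sign ((c.1 : ℤ) - a.1) * Int.sign ((d.1 : ℤ) - a.1) *
    Int.sign ((c.1 : ℤ) - b.1) * Int.sign ((d.1 : ℤ) - b.1) * Int.sign ((d.1 : ℤ) - c.1) : ℤ) : ℝ)

/-- Spacetime Hodge dual of a bivector field: (⋆B) a b A B' = (1/2) ε^{abcd} B_{AB'cd}. -/
noncomputable def starB (B : Fin 4 → Fin 4 → Fin 4 → Fin 4 → ℝ) (a b A B' : Fin 4) : ℝ :=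
  (1/2) * ∑ c : Fin 4, ∑ d : Fin 4, eps a b c d * B A B' c d

theorem eps_swap_snd_trd (a b c d : Fin 4) : eps a c b d = -eps a b c d := by
  unfold eps
  rw [← neg_sub (c.1 : ℤ) b.1, Int.sign_neg]
  push_cast
  ring

theorem eps_swap_trd_fth (a b c d : Fin 4) : eps a b d c = -eps a b c d := by
  unfold eps
  rw [← neg_sub (d.1 : ℤ) c.1, Int.sign_neg]
  push_cast
  ring

theorem eps_ne_zero {a b c d : Fin 4} (hab : a ≠ b) (hac : a ≠ c) (had : a ≠ d)
    (hbc : b ≠ c) (hbd : b ≠ d) (hcd : c ≠ d) : eps a b c d ≠ 0 := by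
  unfold eps
  simp only [ne_eq, Int.cast_eq_zero, mul_eq_zero, Int.sign_eq_zero_iff_zero]
  omega

theorem exists_fourth (a b c : Fin 4) : ∃ d, a ≠ d ∧ b ≠ d ∧ c ≠ d := by
  decide +revert

theorem univ_eq_of_distinct {a b c d : Fin 4} (hab : a ≠ b) (hac : a ≠ c) (had : a ≠ d)
    (hbc : b ≠ c) (hbd : b ≠ d) (hcd : c ≠ d) : (Finset.univ : Finset (Fin 4)) = {a, b, c, d} := by
  symm
  rw [← Finset.card_eq_iff_eq_univ]
  simp [*]

theorem starB_self (B : Fin 4 → Fin 4 → Fin 4 → Fin 4 → ℝ) (a A B' : Fin 4) :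
    starB B a a A B' = 0 := by
  simp [starB, eps]

/-- For pairwise distinct indices the Hodge dual reduces to one component on the complementary
pair; the factor `1/2` is absorbed by the two orderings of that pair. -/
theorem starB_of_distinct {B : Fin 4 → Fin 4 → Fin 4 → Fin 4 → ℝ}
    (hst : ∀ A B' a b : Fin 4, B A B' a b = -B A B' b a) {a b c d : Fin 4}
    (hab : a ≠ b) (hac : a ≠ c) (had : a ≠ d) (hbc : b ≠ c) (hbd : b ≠ d) (hcd : c ≠ d)
    (A B' : Fin 4) : starB B a b A B' = eps a b c d * B A B' c d := by
  have hfst : ∀ x, eps a b a x = 0 := by simp [eps]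
  have hsnd : ∀ x, eps a b b x = 0 := by simp [eps]
  have hfst' : ∀ x, eps a b x a = 0 := by simp [eps]
  have hsnd' : ∀ x, eps a b x b = 0 := by simp [eps]
  have hdiag : ∀ x, eps a b x x = 0 := by simp [eps]
  have hu := univ_eq_of_distinct hab hac had hbc hbd hcd
  rw [starB, hu]
  have hsum : ∀ f : Fin 4 → ℝ, ∑ x ∈ {a, b, c, d}, f x = f a + (f b + (f c + f d)) := by
    intro f
    rw [Finset.sum_insert (by simp [*]), Finset.sum_insert (by simp [*]),
      Finset.sum_pair hcd]
  simp only [hsum, hfst, hsnd, hfst', hsnd', hdiag, zero_mul, zero_add, add_zero]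
  rw [eps_swap_trd_fth a b c d, hst A B' d c]
  ring

theorem sum_starB_mul {B : Fin 4 → Fin 4 → Fin 4 → Fin 4 → ℝ}
    (hst : ∀ A B' a b : Fin 4, B A B' a b = -B A B' b a) (e : Matrix (Fin 4) (Fin 4) ℝ)
    {a b c d : Fin 4}
    (hab : a ≠ b) (hac : a ≠ c) (had : a ≠ d) (hbc : b ≠ c) (hbd : b ≠ d) (hcd : c ≠ d)
    (A x : Fin 4) :
    ∑ B' : Fin 4, starB B a b A B' * e B' x =
      eps a b c d * ∑ B' : Fin 4, B A B' c d * e B' x := by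
  rw [Finset.mul_sum]
  refine Finset.sum_congr rfl fun B' _ => ?_
  rw [starB_of_distinct hst hab hac had hbc hbd hcd, mul_assoc]

/-- Equivalence of the starred and unstarred linear simplicity constraint sets. -/
theorem starred_iff_unstarred_constraints (e : Matrix (Fin 4) (Fin 4) ℝ)
    (B : Fin 4 → Fin 4 → Fin 4 → Fin 4 → ℝ)
    (hint : ∀ A B' a b : Fin 4, B A B' a b = -B B' A a b)
    (hst : ∀ A B' a b : Fin 4, B A B' a b = -B A B' b a) :
    ((∀ A a b c : Fin 4, c ≠ a → c ≠ b →
        ∑ B' : Fin 4, starB B a b A B' * e B' c = 0) ∧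
     (∀ A a b c : Fin 4, b ≠ a → c ≠ a →
        ∑ B' : Fin 4, starB B a b A B' * e B' b = ∑ B' : Fin 4, starB B a c A B' * e B' c))
    ↔
    ((∀ A a b : Fin 4,
        (∑ B' : Fin 4, B A B' a b * e B' a = 0) ∧ (∑ B' : Fin 4, B A B' a b * e B' b = 0)) ∧
     (∀ A a b c : Fin 4, a ≠ b → a ≠ c → b ≠ c →
        ∑ B' : Fin 4, (B A B' a b * e B' c + B A B' a c * e B' b) = 0)) := by
  have hanti : ∀ A a b c : Fin 4,
      ∑ B' : Fin 4, B A B' a b * e B' c = -∑ B' : Fin 4, B A B' b a * e B' c := by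
    intro A a b c
    rw [← Finset.sum_neg_distrib]
    refine Finset.sum_congr rfl fun B' _ => ?_
    rw [hst A B' a b, neg_mul]
  constructor
  · rintro ⟨h₁, h₂⟩
    have key : ∀ A a b : Fin 4, ∑ B' : Fin 4, B A B' a b * e B' a = 0 := by
      intro A a b
      by_cases hab : a = b
      · subst hab
        linarith [hanti A a a a]
      · obtain ⟨c, hac, hbc, -⟩ := exists_fourth a b b
        obtain ⟨d, had, hbd, hcd⟩ := exists_fourth a b c
        have h := h₁ A c d a hac had
        rw [sum_starB_mul hst e hcd hac.symm hbc.symm had.symm hbd.symm hab] at h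
        exact (mul_eq_zero.mp h).resolve_left
          (eps_ne_zero hcd hac.symm hbc.symm had.symm hbd.symm hab)
    refine ⟨fun A a b => ⟨key A a b, ?_⟩, ?_⟩
    · rw [hanti, key, neg_zero]
    · intro A a b c hab hac hbc
      obtain ⟨d, had, hbd, hcd⟩ := exists_fourth a b c
      have h := h₂ A d b c hbd hcd
      rw [sum_starB_mul hst e hbd.symm had.symm hcd.symm hab.symm hbc hac,
        sum_starB_mul hst e hcd.symm had.symm hbd.symm hac.symm hbc.symm hab,
        -- three adjacent transpositions exchange `b` and `c` in `d c a b`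
        eps_swap_trd_fth d c b a, eps_swap_snd_trd d b c a, eps_swap_trd_fth d b a c] at h
      have hne := eps_ne_zero hbd.symm had.symm hcd.symm hab.symm hbc hac
      rw [Finset.sum_add_distrib]
      refine (mul_eq_zero.mp ?_).resolve_left hne
      linear_combination h
  · rintro ⟨h₁, h₂⟩
    constructor
    · intro A a b c hca hcb
      by_cases hab : a = b
      · subst hab
        simp [starB_self]
      · obtain ⟨d, had, hbd, hcd⟩ := exists_fourth a b c
        rw [sum_starB_mul hst e hab hca.symm had hcb.symm hbd hcd, (h₁ A c d).1, mul_zero]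
    · intro A a b c hba hca
      by_cases hbc : b = c
      · rw [hbc]
      · obtain ⟨d, had, hbd, hcd⟩ := exists_fourth a b c
        have h := h₂ A d c b hcd.symm hbd.symm (Ne.symm hbc)
        rw [Finset.sum_add_distrib] at h
        rw [sum_starB_mul hst e hba.symm hca.symm had hbc hbd hcd,
          sum_starB_mul hst e hca.symm hba.symm had (Ne.symm hbc) hcd hbd,
          eps_swap_snd_trd a b c d, hanti A c d b, hanti A b d c]
        linear_combination -eps a b c d * h
end

section
/- Well-definedness of the 4-simplex volume: let B : Fin 5 → Fin 5 → Matrix (Fin 4) (Fin 4) ℝ be a configuration of bivectors on the complete graph on 5 vertices satisfying closure and cross-simplicity. Then for all pairwise distinct i, j, k, l ∈ Fin 5: ⟨B i j, B k l⟩ = ⟨B i k, B l j⟩; that is, the 4-volume ε_{ABCD} B^{AB}_f B^{CD}_{f'} does not depend on which pair of faces spanning the 4-simplex is used to compute it. -/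
/-!
The ε-pairing is a symmetric bilinear form. Pairing the closure relation at a vertex `i` with a
face `B k l` disjoint from `i`, cross-simplicity kills the two terms in which the faces share a
vertex, leaving `⟨B i j, B k l⟩ = -⟨B i m, B k l⟩`, where `m` is the fifth vertex
(`epsPairing_exchange`). Exchanging an endpoint three times then gives
`⟨B i j, B k l⟩ = -⟨B i m, B k l⟩ = ⟨B i m, B l k⟩ = -⟨B i m, B l j⟩ = ⟨B i k, B l j⟩`.
-/

open Matrix

/-- The ε-pairing ⟨X, Y⟩ = ε^{ABCD} X_{AB} Y_{CD} of two (antisymmetric) 4×4 matrices. -/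
noncomputable def epsPairing (X Y : Matrix (Fin 4) (Fin 4) ℝ) : ℝ :=
  ∑ A : Fin 4, ∑ B : Fin 4, ∑ C : Fin 4, ∑ D : Fin 4, eps A B C D * X A B * Y C D

/-- Swapping the two index pairs is an even permutation. -/
lemma eps_swap_pairs (a b c d : Fin 4) : eps c d a b = eps a b c d := by
  unfold eps
  congr 1
  revert a b c d
  decide

lemma epsPairing_comm (X Y : Matrix (Fin 4) (Fin 4) ℝ) : epsPairing X Y = epsPairing Y X := by
  have h (X Y : Matrix (Fin 4) (Fin 4) ℝ) : epsPairing X Y =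
      ∑ p : Fin 4 × Fin 4, ∑ q : Fin 4 × Fin 4, eps p.1 p.2 q.1 q.2 * X p.1 p.2 * Y q.1 q.2 := by
    simp only [epsPairing, Fintype.sum_prod_type]
  rw [h, h, Finset.sum_comm]
  refine Finset.sum_congr rfl fun p _ => Finset.sum_congr rfl fun q _ => ?_
  rw [eps_swap_pairs]
  ring

lemma epsPairing_add_left (X Y Z : Matrix (Fin 4) (Fin 4) ℝ) :
    epsPairing (X + Y) Z = epsPairing X Z + epsPairing Y Z := by
  simp only [epsPairing, Matrix.add_apply, mul_add, add_mul, Finset.sum_add_distrib]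

lemma epsPairing_neg_left (X Z : Matrix (Fin 4) (Fin 4) ℝ) :
    epsPairing (-X) Z = -epsPairing X Z := by
  simp only [epsPairing, Matrix.neg_apply, mul_neg, neg_mul, Finset.sum_neg_distrib]

lemma epsPairing_zero_left (Z : Matrix (Fin 4) (Fin 4) ℝ) : epsPairing 0 Z = 0 := by
  simp [epsPairing]

/-- Replacing the endpoint `j` of a face by the vertex `m` that neither face touches flips the
sign of the pairing with a disjoint face. -/
lemma epsPairing_exchange
    (B : Fin 5 → Fin 5 → Matrix (Fin 4) (Fin 4) ℝ)
    (hskew : ∀ i j : Fin 5, B i j = -(B j i))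
    (hclosure : ∀ i : Fin 5, ∑ j ∈ Finset.univ.filter (fun j => j ≠ i), B i j = 0)
    (hcross : ∀ i j k : Fin 5, i ≠ j → i ≠ k → j ≠ k → epsPairing (B i j) (B i k) = 0)
    (i j k l m : Fin 5) (h : [i, j, k, l, m].Nodup) :
    epsPairing (B i j) (B k l) = -epsPairing (B i m) (B k l) := by
  have hset : Finset.univ.filter (fun x => x ≠ i) = {j, m, k, l} := by
    revert i j k l m
    decide
  simp only [List.nodup_cons, List.mem_cons, List.not_mem_nil, or_false, not_or] at h
  obtain ⟨⟨hij, hik, hil, him⟩, ⟨hjk, hjl, hjm⟩, ⟨hkl, hkm⟩, hlm, -⟩ := h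
  have hc := hclosure i
  rw [hset, Finset.sum_insert (by simp [hjm, hjk, hjl]),
    Finset.sum_insert (by simp [Ne.symm hkm, Ne.symm hlm]), Finset.sum_pair hkl] at hc
  have hp := congrArg (fun X => epsPairing X (B k l)) hc
  simp only [epsPairing_add_left, epsPairing_zero_left] at hp
  have hk : epsPairing (B i k) (B k l) = 0 := by
    rw [hskew i k, epsPairing_neg_left, hcross k i l (Ne.symm hik) hkl hil, neg_zero]
  have hl : epsPairing (B i l) (B k l) = 0 := by
    rw [hskew i l, epsPairing_neg_left, epsPairing_comm, hskew k l, epsPairing_neg_left,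
      hcross l k i (Ne.symm hkl) (Ne.symm hil) (Ne.symm hik), neg_zero, neg_zero]
  linarith

/-- Well-definedness of the 4-simplex volume: given closure and cross-simplicity,
the 4-volume does not depend on the pair of faces used to compute it. -/
theorem four_volume_well_defined
    (B : Fin 5 → Fin 5 → Matrix (Fin 4) (Fin 4) ℝ)
    (hanti : ∀ i j : Fin 5, (B i j)ᵀ = -(B i j))
    (hskew : ∀ i j : Fin 5, B i j = -(B j i))
    (hclosure : ∀ i : Fin 5, ∑ j ∈ Finset.univ.filter (fun j => j ≠ i), B i j = 0)
    (hcross : ∀ i j k : Fin 5, i ≠ j → i ≠ k → j ≠ k → epsPairing (B i j) (B i k) = 0) :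
    ∀ i j k l : Fin 5, i ≠ j → i ≠ k → i ≠ l → j ≠ k → j ≠ l → k ≠ l →
      epsPairing (B i j) (B k l) = epsPairing (B i k) (B l j) := by
  intro i j k l hij hik hil hjk hjl hkl
  obtain ⟨m, hm⟩ : ∃ m, [i, j, k, l, m].Nodup := by
    revert i j k l
    decide
  have ex := epsPairing_exchange B hskew hclosure hcross
  have h₁ : epsPairing (B i j) (B k l) = -epsPairing (B i m) (B k l) := ex i j k l m hm
  have h₂ : epsPairing (B l k) (B i m) = -epsPairing (B l j) (B i m) :=
    ex l k i m j (by grind)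
  have h₃ : epsPairing (B i m) (B l j) = -epsPairing (B i k) (B l j) :=
    ex i m l j k (by grind)
  rw [h₁, epsPairing_comm, hskew k l, epsPairing_neg_left, h₂, epsPairing_comm (B l j), h₃]
  ring
end
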